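/- Let d ≥ 1, let α = (α_1,…,α_d) be a multi-index with α_j > −1/2 for each j, let β > 0, and let k and l be integers with k > β and l > β. Then for every bounded measurable function f on (0,∞)^d the following two conditions are equivalent: (a) there exists A ≥ 0 such that sup_x |∂^k_t P_t^α f(x)| ≤ A t^{−k+β} for all t > 0; (b) there exists A' ≥ 0 such that sup_x |∂^l_t P_t^α f(x)| ≤ A' t^{−l+β} for all t > 0. Moreover there is a constant C > 0, depending only on α, d, β, k, l, such that if (a) holds with constant A then (b) holds with constant A' = C·A. -/

import Mathlib

open MeasureTheory Real Set

noncomputable def besselI (ν z : ℝ) : ℝ :=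
  ∑' m : ℕ, (z / 2) ^ (2 * (m : ℝ) + ν) / (Nat.factorial m * Real.Gamma ((m : ℝ) + ν + 1))

/-- The positive orthant `(0,∞)^d`. -/
def posOrthant (d : ℕ) : Set (Fin d → ℝ) := Set.univ.pi fun _ => Set.Ioi 0

/-- The Poisson–Laguerre kernel `p_t^α(x,y)`. -/
noncomputable def plKernel (d : ℕ) (α : Fin d → ℝ) (t : ℝ) (x y : Fin d → ℝ) : ℝ :=
  (1 / (2 * Real.sqrt π)) *
    ∫ r in Set.Ioo (0 : ℝ) 1,
      (t * Real.exp (t ^ 2 / (4 * Real.log r)) /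
          ((1 - r) ^ d * (-Real.log r) ^ ((3 : ℝ) / 2))) *
        (∏ j, (y j / x j) ^ (α j / 2) *
            Real.exp (-((r * x j + y j) / (1 - r)) - α j * Real.log r / 2) *
            besselI (α j) (2 * Real.sqrt (r * x j * y j) / (1 - r))) / r

/-- The Poisson–Laguerre semigroup `P_t^α f`, with the convention `P_0^α f = f`. -/
noncomputable def plP (d : ℕ) (α : Fin d → ℝ) (t : ℝ)
    (f : (Fin d → ℝ) → ℝ) (x : Fin d → ℝ) : ℝ :=
  if t = 0 then f x else ∫ y in posOrthant d, plKernel d α t x y * f y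

open Filter Topology ProbabilityTheory
open scoped ENNReal BoundedContinuousFunction

/-- A bounded continuous injective function on `ℝ` that agrees with `exp (-x)` for `0 ≤ x`. -/
noncomputable def expNegExtension : ℝ →ᵇ ℝ :=
  BoundedContinuousFunction.ofNormedAddCommGroup
    (fun x : ℝ => Real.exp (-max x 0) + (1 - Real.exp (min x 0))) (by fun_prop) 2 (by
      intro x
      have h1 : Real.exp (-max x 0) ≤ 1 := Real.exp_le_one_iff.2 (by simp)
      have h2 : Real.exp (min x 0) ≤ 1 := Real.exp_le_one_iff.2 (by simp)
      have h3 := Real.exp_pos (-max x 0)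
      have h4 := Real.exp_pos (min x 0)
      rw [Real.norm_eq_abs, abs_le]
      constructor <;> linarith)

lemma expNegExtension_of_nonneg {x : ℝ} (hx : 0 ≤ x) : expNegExtension x = Real.exp (-x) := by
  simp [expNegExtension, hx]

lemma strictAnti_expNegExtension : StrictAnti expNegExtension := by
  intro x y hxy
  change Real.exp (-max y 0) + (1 - Real.exp (min y 0)) <
    Real.exp (-max x 0) + (1 - Real.exp (min x 0))
  rcases le_or_gt 0 x with hx | hx
  · have hy : 0 ≤ y := hx.trans hxy.le
    simp [hx, hy, hxy]
  · have h1 : Real.exp (-max y 0) ≤ Real.exp (-max x 0) := by gcongr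
    have h2 : Real.exp (min x 0) < Real.exp (min y 0) := by
      apply Real.exp_lt_exp.2
      simp [hx.le, hxy, hx]
    linarith

/-- Finite measures on the half-line are determined by their Laplace transforms at the natural
numbers. -/
theorem measure_eq_of_laplace_eq {μ ν : Measure ℝ} [IsFiniteMeasure μ] [IsFiniteMeasure ν]
    (hμ : ∀ᵐ x ∂μ, 0 ≤ x) (hν : ∀ᵐ x ∂ν, 0 ≤ x)
    (h : ∀ n : ℕ, ∫ x, Real.exp (-(n * x)) ∂μ = ∫ x, Real.exp (-(n * x)) ∂ν) : μ = ν := by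
  let A : StarSubalgebra ℝ (ℝ →ᵇ ℝ) :=
    { Algebra.adjoin ℝ {expNegExtension} with
      star_mem' := fun {a} ha => by rwa [show star a = a from by ext; simp] }
  have hmem : expNegExtension ∈ A := Algebra.subset_adjoin rfl
  refine ext_of_forall_mem_subalgebra_integral_eq_of_polish (A := A) ?_ ?_
  · intro x y hxy
    refine ⟨expNegExtension, ⟨_, ⟨expNegExtension, hmem, rfl⟩, rfl⟩, ?_⟩
    exact strictAnti_expNegExtension.injective.ne hxy
  · have hpow : ∀ (ρ : Measure ℝ), (∀ᵐ x ∂ρ, 0 ≤ x) → ∀ n : ℕ,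
        ∫ x, (expNegExtension x) ^ n ∂ρ = ∫ x, Real.exp (-(n * x)) ∂ρ := by
      intro ρ hρ n
      refine integral_congr_ae (hρ.mono fun x hx => ?_)
      simp only
      rw [expNegExtension_of_nonneg hx, ← Real.exp_nat_mul]
      ring_nf
    intro g hg
    have hg' : g ∈ Algebra.adjoin ℝ {expNegExtension} := hg
    rw [Algebra.adjoin_singleton_eq_range_aeval] at hg'
    obtain ⟨p, rfl⟩ := hg'
    induction p using Polynomial.induction_on' with
    | add p q hp hq =>
      have hAp : (Polynomial.aeval expNegExtension) p ∈ A := by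
        change _ ∈ Algebra.adjoin ℝ {expNegExtension}
        rw [Algebra.adjoin_singleton_eq_range_aeval]; exact ⟨p, rfl⟩
      have hAq : (Polynomial.aeval expNegExtension) q ∈ A := by
        change _ ∈ Algebra.adjoin ℝ {expNegExtension}
        rw [Algebra.adjoin_singleton_eq_range_aeval]; exact ⟨q, rfl⟩
      have hp' := hp hAp
      have hq' := hq hAq
      simp only [map_add, BoundedContinuousFunction.coe_add, Pi.add_apply] at hp' hq' ⊢
      rw [integral_add, integral_add]
      · exact congrArg₂ (· + ·) hp' hq'
      all_goals exact BoundedContinuousFunction.integrable _ _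
    | monomial n a =>
      have hval : ∀ x : ℝ, (Polynomial.aeval expNegExtension (Polynomial.monomial n a)) x =
          a * expNegExtension x ^ n := fun x => by
        rw [Polynomial.aeval_monomial, BoundedContinuousFunction.coe_mul, Pi.mul_apply,
          BoundedContinuousFunction.coe_pow, Pi.pow_apply,
          BoundedContinuousFunction.algebraMap_apply, smul_eq_mul, mul_one]
      change ∫ x, (Polynomial.aeval expNegExtension (Polynomial.monomial n a)) x ∂μ =
        ∫ x, (Polynomial.aeval expNegExtension (Polynomial.monomial n a)) x ∂ν
      simp only [hval]
      rw [integral_const_mul, integral_const_mul, hpow μ hμ, hpow ν hν, h]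

/-- The primitive of the Gaussian `exp (-u ^ 2)` vanishing at `0`. -/
noncomputable def gaussPrimitive (x : ℝ) : ℝ := ∫ u in (0 : ℝ)..x, Real.exp (-1 * u ^ 2)

lemma hasDerivAt_gaussPrimitive (x : ℝ) :
    HasDerivAt gaussPrimitive (Real.exp (-1 * x ^ 2)) x :=
  (Continuous.integral_hasStrictDerivAt (f := fun u : ℝ => Real.exp (-1 * u ^ 2))
    (by fun_prop) 0 x).hasDerivAt

lemma tendsto_gaussPrimitive_atTop : Tendsto gaussPrimitive atTop (𝓝 (√π / 2)) := by
  have h := intervalIntegral_tendsto_integral_Ioi (0 : ℝ)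
    ((integrable_exp_neg_mul_sq (b := 1) one_pos).integrableOn (s := Ioi 0)) tendsto_id
  rw [integral_gaussian_Ioi, div_one] at h
  exact h

lemma gaussPrimitive_neg (x : ℝ) : gaussPrimitive (-x) = -gaussPrimitive x := by
  have h := intervalIntegral.integral_comp_neg (a := (0 : ℝ)) (b := x)
    (fun u : ℝ => Real.exp (-1 * u ^ 2))
  simp only [even_two, Even.neg_pow, neg_zero] at h
  rw [gaussPrimitive, gaussPrimitive, intervalIntegral.integral_symm, h]

lemma tendsto_gaussPrimitive_atBot : Tendsto gaussPrimitive atBot (𝓝 (-(√π / 2))) := by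
  have h := (tendsto_gaussPrimitive_atTop.comp tendsto_neg_atBot_atTop).neg
  refine h.congr fun x => ?_
  simp [gaussPrimitive_neg]

/-- The density of the one-sided stable law of index `1 / 2`, the Poisson subordinator. -/
noncomputable def stableDensity (t s : ℝ) : ℝ :=
  t / (2 * √π) * (s ^ (-(3 / 2 : ℝ)) * Real.exp (-(t ^ 2 / (4 * s))))

lemma stableDensity_nonneg {t s : ℝ} (ht : 0 ≤ t) (hs : 0 ≤ s) : 0 ≤ stableDensity t s := by
  unfold stableDensity; positivity

lemma measurable_stableDensity (t : ℝ) : Measurable (stableDensity t) := by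
  unfold stableDensity; fun_prop

lemma hasDerivAt_stable_primitive {t m s : ℝ} (hs : 0 < s) :
    HasDerivAt (fun s : ℝ => -(1 / √π) *
      (Real.exp (-(t * m)) * gaussPrimitive (t / 2 * s ^ (-(1 / 2 : ℝ)) - m * s ^ (1 / 2 : ℝ)) +
       Real.exp (t * m) * gaussPrimitive (t / 2 * s ^ (-(1 / 2 : ℝ)) + m * s ^ (1 / 2 : ℝ))))
      (stableDensity t s * Real.exp (-(m ^ 2 * s))) s := by
  have h1 : HasDerivAt (fun s : ℝ => s ^ (-(1 / 2 : ℝ))) (-(1 / 2) * s ^ (-(3 / 2 : ℝ))) s := by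
    have := Real.hasDerivAt_rpow_const (x := s) (p := -(1 / 2 : ℝ)) (Or.inl hs.ne')
    convert! this using 2; norm_num
  have h2 : HasDerivAt (fun s : ℝ => s ^ (1 / 2 : ℝ)) ((1 / 2) * s ^ (-(1 / 2 : ℝ))) s := by
    have := Real.hasDerivAt_rpow_const (x := s) (p := (1 / 2 : ℝ)) (Or.inl hs.ne')
    convert! this using 2; norm_num
  have hd1 := (hasDerivAt_gaussPrimitive _).comp s ((h1.const_mul (t / 2)).sub (h2.const_mul m))
  have hd2 := (hasDerivAt_gaussPrimitive _).comp s ((h1.const_mul (t / 2)).add (h2.const_mul m))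
  have hd := ((hd1.const_mul (Real.exp (-(t * m)))).add
    (hd2.const_mul (Real.exp (t * m)))).const_mul (-(1 / √π))
  refine hd.congr_deriv ?_
  have hp : s ^ (1 / 2 : ℝ) * s ^ (-(1 / 2 : ℝ)) = 1 := by
    rw [← Real.rpow_add hs]; norm_num
  have hq : (s ^ (1 / 2 : ℝ)) ^ 2 = s := by
    rw [← Real.rpow_natCast, ← Real.rpow_mul hs.le]; norm_num
  have hr : (s ^ (-(1 / 2 : ℝ))) ^ 2 = 1 / s := by
    rw [← Real.rpow_natCast, ← Real.rpow_mul hs.le]; norm_num [Real.rpow_neg_one]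
  have e1 : Real.exp (-(t * m)) *
      Real.exp (-1 * (t / 2 * s ^ (-(1 / 2 : ℝ)) - m * s ^ (1 / 2 : ℝ)) ^ 2) =
      Real.exp (-(t ^ 2 / (4 * s))) * Real.exp (-(m ^ 2 * s)) := by
    rw [← Real.exp_add, ← Real.exp_add]
    congr 1
    have : t ^ 2 / (4 * s) = t ^ 2 / 4 * (1 / s) := by field_simp
    rw [this, ← hr]
    nth_rewrite 4 [← hq]
    linear_combination t * m * hp
  have e2 : Real.exp (t * m) *
      Real.exp (-1 * (t / 2 * s ^ (-(1 / 2 : ℝ)) + m * s ^ (1 / 2 : ℝ)) ^ 2) =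
      Real.exp (-(t ^ 2 / (4 * s))) * Real.exp (-(m ^ 2 * s)) := by
    rw [← Real.exp_add, ← Real.exp_add]
    congr 1
    have : t ^ 2 / (4 * s) = t ^ 2 / 4 * (1 / s) := by field_simp
    rw [this, ← hr]
    nth_rewrite 4 [← hq]
    linear_combination -t * m * hp
  simp only [Pi.sub_apply, Pi.add_apply]
  rw [← mul_assoc (Real.exp (-(t * m))), ← mul_assoc (Real.exp (t * m))]
  rw [e1, e2, stableDensity]
  field_simp
  ring

lemma tendsto_rpow_neg_half_nhdsGT : Tendsto (fun s : ℝ => s ^ (-(1 / 2 : ℝ))) (𝓝[>] 0) atTop :=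
  tendsto_rpow_neg_nhdsGT_zero (by norm_num)

/-- The Laplace transform of the stable law of index `1 / 2`. -/
theorem integral_stableDensity_mul_exp {t m : ℝ} (ht : 0 < t) (hm : 0 ≤ m) :
    IntegrableOn (fun s => stableDensity t s * Real.exp (-(m ^ 2 * s))) (Ioi 0) ∧
    ∫ s in Ioi (0 : ℝ), stableDensity t s * Real.exp (-(m ^ 2 * s)) = Real.exp (-(t * m)) := by
  have hπ : 0 < √π := Real.sqrt_pos.2 Real.pi_pos
  set G : ℝ → ℝ := fun s : ℝ => -(1 / √π) *
      (Real.exp (-(t * m)) * gaussPrimitive (t / 2 * s ^ (-(1 / 2 : ℝ)) - m * s ^ (1 / 2 : ℝ)) +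
       Real.exp (t * m) * gaussPrimitive (t / 2 * s ^ (-(1 / 2 : ℝ)) + m * s ^ (1 / 2 : ℝ))) with hG
  have hhalf : Tendsto (fun s : ℝ => m * s ^ (1 / 2 : ℝ)) (𝓝[>] 0) (𝓝 0) := by
    have : ContinuousAt (fun s : ℝ => m * s ^ (1 / 2 : ℝ)) 0 :=
      continuousAt_const.mul (Real.continuousAt_rpow_const _ _ (Or.inr (by norm_num)))
    have h := this.tendsto.mono_left (nhdsWithin_le_nhds (s := Ioi 0))
    simpa using h
  have hbig : Tendsto (fun s : ℝ => t / 2 * s ^ (-(1 / 2 : ℝ))) (𝓝[>] 0) atTop :=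
    tendsto_rpow_neg_half_nhdsGT.const_mul_atTop (by positivity)
  have hG0 : Tendsto G (𝓝[>] 0)
      (𝓝 (-(1 / √π) * (Real.exp (-(t * m)) * (√π / 2) + Real.exp (t * m) * (√π / 2)))) := by
    refine Tendsto.const_mul _ (Tendsto.add (Tendsto.const_mul _ ?_) (Tendsto.const_mul _ ?_))
    · refine tendsto_gaussPrimitive_atTop.comp ?_
      simpa [sub_eq_add_neg] using hbig.atTop_add hhalf.neg
    · exact tendsto_gaussPrimitive_atTop.comp (hbig.atTop_add hhalf)
  have hsmall : Tendsto (fun s : ℝ => t / 2 * s ^ (-(1 / 2 : ℝ))) atTop (𝓝 0) := by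
    simpa using (tendsto_rpow_neg_atTop (y := (1 / 2 : ℝ)) (by norm_num)).const_mul (t / 2)
  have hGinf : Tendsto G atTop
      (𝓝 (-(1 / √π) * (-(Real.exp (-(t * m)) * (√π / 2)) + Real.exp (t * m) * (√π / 2)))) := by
    rcases hm.eq_or_lt with rfl | hm
    · have hc := (hasDerivAt_gaussPrimitive 0).continuousAt.tendsto
      have h0 : gaussPrimitive 0 = 0 := by simp [gaussPrimitive]
      rw [h0] at hc
      have := (hc.comp hsmall).const_mul (-(1 / √π) * 2)
      simp only [hG, mul_zero, neg_zero, Real.exp_zero, one_mul, zero_mul, sub_zero, add_zero,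
        neg_add_cancel] at this ⊢
      refine this.congr fun s => ?_
      simp only [Function.comp]
      ring
    · have hsq : Tendsto (fun s : ℝ => m * s ^ (1 / 2 : ℝ)) atTop atTop :=
        (tendsto_rpow_atTop (by norm_num)).const_mul_atTop hm
      rw [← mul_neg]
      refine Tendsto.const_mul _ (Tendsto.add (Tendsto.const_mul _ ?_) (Tendsto.const_mul _ ?_))
      · refine tendsto_gaussPrimitive_atBot.comp ?_
        simpa [sub_eq_add_neg] using hsmall.add_atBot (tendsto_neg_atTop_atBot.comp hsq)
      · exact tendsto_gaussPrimitive_atTop.comp (hsmall.add_atTop hsq)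
  set G0 := -(1 / √π) * (Real.exp (-(t * m)) * (√π / 2) + Real.exp (t * m) * (√π / 2)) with hG0'
  have hcont : ContinuousWithinAt (Function.update G 0 G0) (Ici 0) 0 := by
    rw [continuousWithinAt_update_same]
    simpa using hG0
  have hderiv : ∀ s ∈ Ioi (0 : ℝ), HasDerivAt (Function.update G 0 G0)
      (stableDensity t s * Real.exp (-(m ^ 2 * s))) s := by
    intro s hs
    refine (hasDerivAt_stable_primitive hs).congr_of_eventuallyEq ?_
    filter_upwards [lt_mem_nhds hs] with u hu
    rw [Function.update_of_ne hu.ne']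
  have hnonneg : ∀ s ∈ Ioi (0 : ℝ), 0 ≤ stableDensity t s * Real.exp (-(m ^ 2 * s)) :=
    fun s hs => mul_nonneg (stableDensity_nonneg ht.le (le_of_lt hs)) (Real.exp_pos _).le
  have hlim : Tendsto (Function.update G 0 G0) atTop
      (𝓝 (-(1 / √π) * (-(Real.exp (-(t * m)) * (√π / 2)) + Real.exp (t * m) * (√π / 2)))) := by
    refine hGinf.congr' ?_
    filter_upwards [eventually_gt_atTop 0] with s hs
    rw [Function.update_of_ne hs.ne']
  refine ⟨integrableOn_Ioi_deriv_of_nonneg hcont hderiv hnonneg hlim, ?_⟩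
  rw [integral_Ioi_of_hasDerivAt_of_nonneg hcont hderiv hnonneg hlim, Function.update_self, hG0']
  field_simp
  ring

/-- The one-sided stable law of index `1 / 2`. -/
noncomputable def stableMeasure (t : ℝ) : Measure ℝ :=
  (volume.restrict (Ioi 0)).withDensity fun s => ENNReal.ofReal (stableDensity t s)

lemma integrableOn_stableDensity {t : ℝ} (ht : 0 < t) :
    IntegrableOn (stableDensity t) (Ioi 0) := by
  simpa using (integral_stableDensity_mul_exp ht le_rfl).1

lemma integral_stableDensity {t : ℝ} (ht : 0 < t) :
    ∫ s in Ioi (0 : ℝ), stableDensity t s = 1 := by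
  simpa using (integral_stableDensity_mul_exp ht le_rfl).2

lemma isFiniteMeasure_stableMeasure {t : ℝ} (ht : 0 < t) :
    IsFiniteMeasure (stableMeasure t) :=
  isFiniteMeasure_withDensity_ofReal (integrableOn_stableDensity ht).2

lemma ae_pos_stableMeasure (t : ℝ) : ∀ᵐ s ∂(stableMeasure t), 0 < s :=
  (withDensity_absolutelyContinuous _ _).ae_le (ae_restrict_mem measurableSet_Ioi)

lemma integral_stableMeasure {t : ℝ} (ht : 0 < t) (g : ℝ → ℝ) :
    ∫ s, g s ∂(stableMeasure t) = ∫ s in Ioi (0 : ℝ), stableDensity t s * g s := by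
  rw [stableMeasure, integral_withDensity_eq_integral_toReal_smul
    (measurable_stableDensity t).ennreal_ofReal (by simp)]
  refine setIntegral_congr_fun measurableSet_Ioi fun s hs => ?_
  simp only [smul_eq_mul]
  rw [ENNReal.toReal_ofReal (stableDensity_nonneg ht.le (le_of_lt hs))]

lemma stableMeasure_add {t u : ℝ} (ht : 0 < t) (hu : 0 < u) :
    ((stableMeasure t).prod (stableMeasure u)).map (fun p => p.1 + p.2) =
      stableMeasure (t + u) := by
  have := isFiniteMeasure_stableMeasure ht
  have := isFiniteMeasure_stableMeasure hu
  have := isFiniteMeasure_stableMeasure (add_pos ht hu)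
  have hlap : ∀ {v : ℝ}, 0 < v → ∀ n : ℕ, ∫ s, Real.exp (-(n * s)) ∂(stableMeasure v) =
      Real.exp (-(v * √n)) := by
    intro v hv n
    rw [integral_stableMeasure hv]
    have := (integral_stableDensity_mul_exp hv (Real.sqrt_nonneg n)).2
    rwa [Real.sq_sqrt n.cast_nonneg] at this
  refine measure_eq_of_laplace_eq ?_ ((ae_pos_stableMeasure _).mono fun _ h => h.le) fun n => ?_
  · rw [ae_map_iff (by fun_prop) measurableSet_Ici]
    filter_upwards [Measure.quasiMeasurePreserving_fst.ae (ae_pos_stableMeasure t),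
      Measure.quasiMeasurePreserving_snd.ae (ae_pos_stableMeasure u)] with p h1 h2
    exact (add_pos h1 h2).le
  · rw [integral_map (by fun_prop) (by fun_prop), hlap (add_pos ht hu)]
    have : ∀ p : ℝ × ℝ, Real.exp (-(n * (p.1 + p.2))) =
        Real.exp (-(n * p.1)) * Real.exp (-(n * p.2)) := fun p => by
      rw [← Real.exp_add]; ring_nf
    simp only [this]
    rw [integral_prod_mul (fun s : ℝ => Real.exp (-(n * s))) (fun s : ℝ => Real.exp (-(n * s))),
      hlap ht, hlap hu, ← Real.exp_add]
    ring_nf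

/-- The convolution semigroup property of the stable densities, tested on a bounded function. -/
theorem integral_stableDensity_add {t u M : ℝ} (ht : 0 < t) (hu : 0 < u) {g : ℝ → ℝ}
    (hg : Measurable g) (hM : ∀ s > 0, |g s| ≤ M) :
    ∫ s in Ioi (0 : ℝ), stableDensity t s *
      ∫ s' in Ioi (0 : ℝ), stableDensity u s' * g (s + s') =
    ∫ s in Ioi (0 : ℝ), stableDensity (t + u) s * g s := by
  have := isFiniteMeasure_stableMeasure ht
  have := isFiniteMeasure_stableMeasure hu
  rw [← integral_stableMeasure (add_pos ht hu), ← stableMeasure_add ht hu,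
    integral_map (by fun_prop) hg.aestronglyMeasurable, integral_prod,
    integral_stableMeasure ht]
  · simp only [integral_stableMeasure hu]
  · refine Integrable.of_bound (C := M)
      (hg.comp (measurable_fst.add measurable_snd)).aestronglyMeasurable ?_
    filter_upwards [Measure.quasiMeasurePreserving_fst.ae (ae_pos_stableMeasure t),
      Measure.quasiMeasurePreserving_snd.ae (ae_pos_stableMeasure u)] with p h1 h2
    exact hM _ (add_pos h1 h2)

open Polynomial in
/-- The polynomials `p` for which `∂ᵗⁿ` of the stable density is `t⁻ⁿ p(t² / s)` times it. -/
noncomputable def stablePoly : ℕ → Polynomial ℝ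
  | 0 => 1
  | n + 1 => -(C (n : ℝ)) * stablePoly n + 2 * X * derivative (stablePoly n) +
      (1 - C (1 / 2) * X) * stablePoly n

/-- The `n`-th derivative of the stable density in the time variable. -/
noncomputable def stableDeriv (n : ℕ) (t s : ℝ) : ℝ :=
  (t ^ n)⁻¹ * (stablePoly n).eval (t ^ 2 / s) * stableDensity t s

lemma stableDeriv_zero (t s : ℝ) : stableDeriv 0 t s = stableDensity t s := by
  simp [stableDeriv, stablePoly]

lemma measurable_stableDeriv (n : ℕ) (t : ℝ) : Measurable (stableDeriv n t) := by
  have h : Measurable fun s : ℝ => (stablePoly n).eval (t ^ 2 / s) :=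
    (stablePoly n).continuous.measurable.comp (by fun_prop)
  have := measurable_stableDensity t
  unfold stableDeriv
  fun_prop

lemma hasDerivAt_stableDeriv (n : ℕ) {t s : ℝ} (ht : 0 < t) (hs : 0 < s) :
    HasDerivAt (fun t => stableDeriv n t s) (stableDeriv (n + 1) t s) t := by
  have hw : HasDerivAt (fun t : ℝ => t ^ 2 / s) (2 * t / s) t := by
    simpa using (hasDerivAt_pow 2 t).div_const s
  have hp := ((stablePoly n).hasDerivAt (t ^ 2 / s)).comp t hw
  have hinv : HasDerivAt (fun t : ℝ => (t ^ n)⁻¹) (-(n * t ^ (n - 1)) / (t ^ n) ^ 2) t :=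
    (hasDerivAt_pow n t).inv (by positivity)
  have hexp : HasDerivAt (fun t : ℝ => Real.exp (-(t ^ 2 / (4 * s))))
      (Real.exp (-(t ^ 2 / (4 * s))) * -(2 * t / (4 * s))) t := by
    have h4 : HasDerivAt (fun t : ℝ => t ^ 2 / (4 * s)) (2 * t / (4 * s)) t := by
      simpa using (hasDerivAt_pow 2 t).div_const (4 * s)
    exact h4.neg.exp
  have hη : HasDerivAt (fun t => stableDensity t s)
      ((1 / t - t / (2 * s)) * stableDensity t s) t := by
    have h := ((hasDerivAt_id t).div_const (2 * √π)).mul (hexp.const_mul (s ^ (-(3 / 2 : ℝ))))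
    refine h.congr_deriv ?_
    simp only [stableDensity, id]
    field_simp
    ring
  refine ((hinv.mul hp).mul hη).congr_deriv ?_
  simp only [stableDeriv, stablePoly, Function.comp, Polynomial.eval_add, Polynomial.eval_mul,
    Polynomial.eval_neg, Polynomial.eval_C, Polynomial.eval_X, Polynomial.eval_sub,
    Polynomial.eval_one, Polynomial.eval_ofNat, Pi.mul_apply]
  have hn : (n : ℝ) * t ^ (n - 1) * t = n * t ^ n := by
    rcases n with _ | n
    · simp
    · simp [pow_succ, mul_assoc]
  have hinv' : -(n * t ^ (n - 1)) / (t ^ n) ^ 2 = -n * (t ^ (n + 1))⁻¹ := by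
    rw [pow_succ t n]
    field_simp
    linear_combination -hn
  rw [hinv', pow_succ t n]
  field_simp

lemma exists_abs_eval_le_exp (p : Polynomial ℝ) :
    ∃ C ≥ (0 : ℝ), ∀ w ≥ (0 : ℝ), |p.eval w| ≤ C * Real.exp (w / 8) := by
  induction p using Polynomial.induction_on' with
  | add p q hp hq =>
    obtain ⟨C, hC, h1⟩ := hp
    obtain ⟨D, hD, h2⟩ := hq
    refine ⟨C + D, add_nonneg hC hD, fun w hw => ?_⟩
    rw [Polynomial.eval_add, add_mul]
    exact (abs_add_le _ _).trans (add_le_add (h1 w hw) (h2 w hw))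
  | monomial n a =>
    refine ⟨|a| * (8 ^ n * n.factorial), by positivity, fun w hw => ?_⟩
    have h := Real.pow_div_factorial_le_exp (w / 8) (by positivity) n
    rw [div_le_iff₀ (by positivity), div_pow, div_le_iff₀ (by positivity)] at h
    rw [Polynomial.eval_monomial, abs_mul, abs_pow, abs_of_nonneg hw, mul_assoc]
    gcongr
    linarith

lemma exists_abs_stableDeriv_le (n : ℕ) : ∃ C ≥ (0 : ℝ), ∀ t > 0, ∀ s > 0,
    |stableDeriv n t s| ≤ C * (t ^ n)⁻¹ * stableDensity (t / √2) s := by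
  obtain ⟨C, hC, h⟩ := exists_abs_eval_le_exp (stablePoly n)
  refine ⟨C * √2, by positivity, fun t ht s hs => ?_⟩
  have h2 : (0 : ℝ) < √2 := by positivity
  have hsq : (t / √2) ^ 2 = t ^ 2 / 2 := by
    rw [div_pow, Real.sq_sqrt (by norm_num)]
  rw [stableDeriv, abs_mul, abs_mul, abs_of_nonneg (stableDensity_nonneg ht.le hs.le),
    abs_of_pos (by positivity : 0 < (t ^ n)⁻¹)]
  have hw := h (t ^ 2 / s) (by positivity)
  have hexp : Real.exp (t ^ 2 / s / 8) * Real.exp (-(t ^ 2 / (4 * s))) =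
      Real.exp (-((t / √2) ^ 2 / (4 * s))) := by
    rw [← Real.exp_add, hsq]
    congr 1
    field_simp
    ring
  calc (t ^ n)⁻¹ * |(stablePoly n).eval (t ^ 2 / s)| * stableDensity t s
      ≤ (t ^ n)⁻¹ * (C * Real.exp (t ^ 2 / s / 8)) * stableDensity t s := by
        have := stableDensity_nonneg ht.le hs.le
        gcongr
    _ = (t ^ n)⁻¹ * C * (t / (2 * √π) * (s ^ (-(3 / 2 : ℝ)) *
          (Real.exp (t ^ 2 / s / 8) * Real.exp (-(t ^ 2 / (4 * s)))))) := by
        rw [stableDensity]; ring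
    _ = C * √2 * (t ^ n)⁻¹ * stableDensity (t / √2) s := by
        rw [hexp, stableDensity]
        field_simp

lemma integrableOn_stableDeriv (n : ℕ) {t : ℝ} (ht : 0 < t) :
    IntegrableOn (stableDeriv n t) (Ioi 0) := by
  obtain ⟨C, hC, h⟩ := exists_abs_stableDeriv_le n
  refine Integrable.mono' ((integrableOn_stableDensity (t := t / √2) (by positivity)).const_mul
    (C * (t ^ n)⁻¹)) (measurable_stableDeriv n t).aestronglyMeasurable ?_
  filter_upwards [ae_restrict_mem measurableSet_Ioi] with s hs using h t ht s hs

lemma stableDensity_le_of_mem_Ioo {t₀ t s : ℝ} (ht₀ : 0 < t₀) (hs : 0 < s)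
    (ht : t ∈ Ioo (t₀ / 2) (2 * t₀)) :
    stableDensity (t / √2) s ≤ 4 * stableDensity (t₀ / 2 / √2) s := by
  have h2 : (0 : ℝ) < √2 := by positivity
  have htp : 0 < t := by linarith [ht.1]
  have h1 : t / √2 / (2 * √π) ≤ 4 * (t₀ / 2 / √2 / (2 * √π)) := by
    have : 4 * (t₀ / 2 / √2 / (2 * √π)) = (2 * t₀) / √2 / (2 * √π) := by ring
    rw [this]
    gcongr
    exact ht.2.le
  unfold stableDensity
  rw [← mul_assoc 4]
  gcongr
  exact ht.1.le

/-- Differentiation under the integral sign for the subordination integrals. -/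
theorem hasDerivAt_integral_stableDeriv (n : ℕ) {t₀ M : ℝ} (ht₀ : 0 < t₀) {g : ℝ → ℝ}
    (hg : Measurable g) (hM : ∀ s > 0, |g s| ≤ M) :
    HasDerivAt (fun t => ∫ s in Ioi (0 : ℝ), stableDeriv n t s * g s)
      (∫ s in Ioi (0 : ℝ), stableDeriv (n + 1) t₀ s * g s) t₀ := by
  obtain ⟨C, hC, h⟩ := exists_abs_stableDeriv_le (n + 1)
  have hpos : 0 < t₀ / 2 := by positivity
  have hM0 : 0 ≤ M := (abs_nonneg _).trans (hM 1 one_pos)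
  refine (hasDerivAt_integral_of_dominated_loc_of_deriv_le (s := Ioo (t₀ / 2) (2 * t₀))
    (bound := fun s => C * ((t₀ / 2) ^ (n + 1))⁻¹ * (4 * stableDensity (t₀ / 2 / √2) s) * M)
    (F' := fun t s => stableDeriv (n + 1) t s * g s)
    (Ioo_mem_nhds (by linarith) (by linarith)) ?_ ?_ ?_ ?_ ?_ ?_).2
  · exact Eventually.of_forall fun t => ((measurable_stableDeriv n t).mul hg).aestronglyMeasurable
  · refine (integrableOn_stableDeriv n ht₀).mul_bdd (c := M) hg.aestronglyMeasurable ?_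
    filter_upwards [ae_restrict_mem measurableSet_Ioi] with s hs using hM s hs
  · exact ((measurable_stableDeriv (n + 1) t₀).mul hg).aestronglyMeasurable
  · filter_upwards [ae_restrict_mem measurableSet_Ioi] with s hs t ht
    have htp : 0 < t := hpos.trans ht.1
    rw [norm_mul, Real.norm_eq_abs, Real.norm_eq_abs]
    have hη := stableDensity_nonneg (t := t / √2) (by positivity) (le_of_lt hs)
    refine mul_le_mul ((h t htp s hs).trans ?_) (hM s hs) (abs_nonneg _) ?_
    · refine mul_le_mul ?_ (stableDensity_le_of_mem_Ioo ht₀ hs ht) hη (by positivity)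
      gcongr
      exact ht.1.le
    · have := stableDensity_nonneg (t := t₀ / 2 / √2) (by positivity) (le_of_lt hs)
      positivity
  · exact (((integrableOn_stableDensity (by positivity)).const_mul 4).const_mul _).mul_const M
  · filter_upwards [ae_restrict_mem measurableSet_Ioi] with s hs t ht
    exact (hasDerivAt_stableDeriv n (hpos.trans ht.1) hs).mul_const (g s)

/-- The iterated time derivatives of a subordination integral. -/
theorem iteratedDeriv_integral_stableDensity (n : ℕ) {M : ℝ} {g : ℝ → ℝ}
    (hg : Measurable g) (hM : ∀ s > 0, |g s| ≤ M) :
    ∀ t > 0, iteratedDeriv n (fun t => ∫ s in Ioi (0 : ℝ), stableDensity t s * g s) t =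
      ∫ s in Ioi (0 : ℝ), stableDeriv n t s * g s := by
  induction n with
  | zero => intro t _; simp [stableDeriv_zero]
  | succ n ih =>
    intro t ht
    rw [iteratedDeriv_succ, ← (hasDerivAt_integral_stableDeriv n ht hg hM).deriv]
    refine EventuallyEq.deriv_eq ?_
    filter_upwards [lt_mem_nhds ht] with u hu using ih u hu

theorem exists_abs_integral_stableDeriv_le (n : ℕ) : ∃ C ≥ (0 : ℝ), ∀ (M : ℝ) (g : ℝ → ℝ),
    (∀ s > 0, |g s| ≤ M) → ∀ t > 0,
      |∫ s in Ioi (0 : ℝ), stableDeriv n t s * g s| ≤ C * M * (t ^ n)⁻¹ := by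
  obtain ⟨C, hC, h⟩ := exists_abs_stableDeriv_le n
  refine ⟨C, hC, fun M g hM t ht => ?_⟩
  have hint := ((integrableOn_stableDensity (t := t / √2) (by positivity)).const_mul
    (C * (t ^ n)⁻¹)).mul_const M
  have hle := norm_integral_le_of_norm_le hint
    (f := fun s => stableDeriv n t s * g s) (by
      filter_upwards [ae_restrict_mem measurableSet_Ioi] with s hs
      rw [norm_mul, Real.norm_eq_abs, Real.norm_eq_abs]
      exact mul_le_mul (h t ht s hs) (hM s hs) (abs_nonneg _)
        ((abs_nonneg _).trans (h t ht s hs)))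
  rw [integral_mul_const, integral_const_mul, integral_stableDensity (by positivity)] at hle
  calc _ ≤ _ := hle
    _ = _ := by ring

/-- The terms of the expansion of the one-dimensional Laguerre heat kernel as a Poisson mixture of
gamma densities. The absolute value makes the kernel Markovian for every real `x`. -/
noncomputable def lagTerm (a s x y : ℝ) (m : ℕ) : ℝ :=
  Real.exp (-(Real.exp (-s) * (1 - Real.exp (-s))⁻¹ * |x|)) *
      (Real.exp (-s) * (1 - Real.exp (-s))⁻¹ * |x|) ^ m / m.factorial *
    ((1 - Real.exp (-s))⁻¹ ^ ((m : ℝ) + a + 1) / Real.Gamma (m + a + 1) * y ^ ((m : ℝ) + a) *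
      Real.exp (-((1 - Real.exp (-s))⁻¹ * y)))

/-- The one-dimensional Laguerre heat kernel. -/
noncomputable def lagKernel (a s x y : ℝ) : ℝ :=
  (∑' m, ENNReal.ofReal (lagTerm a s x y m)).toReal

lemma lagKernel_nonneg (a s x y : ℝ) : 0 ≤ lagKernel a s x y := ENNReal.toReal_nonneg

lemma measurable_tsum_lagTerm (a : ℝ) {X : Type*} [MeasurableSpace X] {s x y : X → ℝ}
    (hs : Measurable s) (hx : Measurable x) (hy : Measurable y) :
    Measurable fun p => ∑' m, ENNReal.ofReal (lagTerm a (s p) (x p) (y p) m) := by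
  refine Measurable.tsum fun m => Measurable.ennreal_ofReal ?_
  unfold lagTerm
  fun_prop

lemma measurable_lagKernel (a : ℝ) {X : Type*} [MeasurableSpace X] {s x y : X → ℝ}
    (hs : Measurable s) (hx : Measurable x) (hy : Measurable y) :
    Measurable fun p => lagKernel a (s p) (x p) (y p) :=
  (measurable_tsum_lagTerm a hs hx hy).ennreal_toReal

lemma one_sub_exp_neg_pos {s : ℝ} (hs : 0 < s) : 0 < 1 - Real.exp (-s) := by
  simpa using hs

lemma lagTerm_nonneg {a s : ℝ} (ha : -1 < a) (hs : 0 < s) (x : ℝ) {y : ℝ} (hy : 0 < y) (m : ℕ) :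
    0 ≤ lagTerm a s x y m := by
  have hc := one_sub_exp_neg_pos hs
  have hm : 0 < (m : ℝ) + a + 1 := by have := m.cast_nonneg (α := ℝ); linarith
  have := Real.Gamma_pos_of_pos hm
  unfold lagTerm
  positivity

lemma lagKernel_eq_tsum {a s : ℝ} (ha : -1 < a) (hs : 0 < s) (x : ℝ) {y : ℝ} (hy : 0 < y) :
    lagKernel a s x y = ∑' m, lagTerm a s x y m := by
  rw [lagKernel, ENNReal.tsum_toReal_eq (by simp)]
  exact tsum_congr fun m => ENNReal.toReal_ofReal (lagTerm_nonneg ha hs x hy m)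

lemma lintegral_gamma_mul_exp {b c l : ℝ} (hb : 0 < b) (hc : 0 < c) (hl : 0 ≤ l) :
    ∫⁻ y in Ioi (0 : ℝ), ENNReal.ofReal (c ^ b / Real.Gamma b * y ^ (b - 1) *
      Real.exp (-(c * y)) * Real.exp (-(l * y))) = ENNReal.ofReal ((c / (c + l)) ^ b) := by
  have hcl : 0 < c + l := by linarith
  have hone : ∫⁻ y in Ioi (0 : ℝ), gammaPDF b (c + l) y = 1 := by
    have h := lintegral_add_compl (μ := volume) (fun y => gammaPDF b (c + l) y)
      (measurableSet_Ici (a := (0 : ℝ)))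
    rwa [compl_Ici, lintegral_gammaPDF_of_nonpos le_rfl, add_zero,
      lintegral_gammaPDF_eq_one hb hcl, setLIntegral_congr Ioi_ae_eq_Ici.symm] at h
  rw [← mul_one (ENNReal.ofReal _), ← hone, ← lintegral_const_mul' _ _ ENNReal.ofReal_ne_top]
  refine setLIntegral_congr_fun measurableSet_Ioi fun y hy => ?_
  rw [gammaPDF_of_nonneg (le_of_lt hy), ← ENNReal.ofReal_mul (by positivity)]
  congr 1
  rw [Real.div_rpow hc.le hcl.le, mul_assoc (c ^ b / Real.Gamma b * y ^ (b - 1)), ← Real.exp_add]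
  have : -(c * y) + -(l * y) = -((c + l) * y) := by ring
  rw [this]
  have := Real.rpow_pos_of_pos hcl b
  field_simp

/-- The Laplace transform of the Laguerre heat kernel, in terms of `ℝ≥0∞`-valued integrals. -/
lemma lintegral_tsum_lagTerm_mul_exp {a s l : ℝ} (ha : -1 < a) (hs : 0 < s) (hl : 0 ≤ l) (x : ℝ) :
    ∫⁻ y in Ioi (0 : ℝ), (∑' m, ENNReal.ofReal (lagTerm a s x y m)) *
        ENNReal.ofReal (Real.exp (-(l * y))) =
      ENNReal.ofReal ((1 + l * (1 - Real.exp (-s))) ^ (-(a + 1)) *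
        Real.exp (-(Real.exp (-s) * l / (1 + l * (1 - Real.exp (-s))) * |x|))) := by
  have hq := one_sub_exp_neg_pos hs
  set q := 1 - Real.exp (-s) with hqdef
  have hD : 0 < 1 + l * q := by positivity
  set P : ℝ := Real.exp (-s) * q⁻¹ * |x| with hP
  have hP0 : 0 ≤ P := by positivity
  have hterm : ∀ m : ℕ, ∫⁻ y in Ioi (0 : ℝ), ENNReal.ofReal (lagTerm a s x y m) *
      ENNReal.ofReal (Real.exp (-(l * y))) =
      ENNReal.ofReal ((Real.exp (-P) * (1 + l * q) ^ (-(a + 1))) *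
        ((P * (1 + l * q)⁻¹) ^ m / m.factorial)) := by
    intro m
    have hm : 0 < (m : ℝ) + a + 1 := by have := m.cast_nonneg (α := ℝ); linarith
    have hsplit : ∀ y ∈ Ioi (0 : ℝ), ENNReal.ofReal (lagTerm a s x y m) *
        ENNReal.ofReal (Real.exp (-(l * y))) =
        ENNReal.ofReal (Real.exp (-P) * P ^ m / m.factorial) *
          ENNReal.ofReal (q⁻¹ ^ ((m : ℝ) + a + 1) / Real.Gamma (m + a + 1) *
            y ^ ((m : ℝ) + a + 1 - 1) * Real.exp (-(q⁻¹ * y)) * Real.exp (-(l * y))) := by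
      intro y hy
      rw [← ENNReal.ofReal_mul (lagTerm_nonneg ha hs x hy m), ← ENNReal.ofReal_mul (by positivity),
        lagTerm, add_sub_cancel_right]
      congr 1
      ring
    rw [setLIntegral_congr_fun measurableSet_Ioi hsplit,
      lintegral_const_mul' _ _ ENNReal.ofReal_ne_top,
      lintegral_gamma_mul_exp hm (inv_pos.2 hq) hl, ← ENNReal.ofReal_mul (by positivity)]
    congr 1
    have hfrac : q⁻¹ / (q⁻¹ + l) = (1 + l * q)⁻¹ := by field_simp
    rw [hfrac, add_assoc, Real.rpow_add (inv_pos.2 hD), Real.rpow_natCast, mul_pow,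
      Real.inv_rpow hD.le (a + 1), ← Real.rpow_neg hD.le]
    ring
  have hmeas : ∀ m : ℕ, Measurable fun y : ℝ => ENNReal.ofReal (lagTerm a s x y m) *
      ENNReal.ofReal (Real.exp (-(l * y))) := by
    intro m; unfold lagTerm; fun_prop
  simp_rw [← ENNReal.tsum_mul_right]
  rw [lintegral_tsum fun m => (hmeas m).aemeasurable]
  simp_rw [hterm]
  have hexp := (NormedSpace.expSeries_div_hasSum_exp (P * (1 + l * q)⁻¹)).mul_left
    (Real.exp (-P) * (1 + l * q) ^ (-(a + 1)))
  rw [← ENNReal.ofReal_tsum_of_nonneg (fun m => by positivity) hexp.summable, hexp.tsum_eq,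
    ← congrFun Real.exp_eq_exp_ℝ]
  congr 1
  rw [mul_comm (Real.exp (-P)), mul_assoc, ← Real.exp_add]
  congr 2
  rw [hP]
  field_simp
  ring

lemma ae_tsum_lagTerm_lt_top {a s : ℝ} (ha : -1 < a) (hs : 0 < s) (x : ℝ) :
    ∀ᵐ y ∂(volume.restrict (Ioi (0 : ℝ))), ∑' m, ENNReal.ofReal (lagTerm a s x y m) < ∞ := by
  have h := lintegral_tsum_lagTerm_mul_exp ha hs le_rfl x
  simp only [zero_mul, neg_zero, Real.exp_zero, ENNReal.ofReal_one, mul_one] at h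
  refine ae_lt_top
    (measurable_tsum_lagTerm a measurable_const measurable_const measurable_id') ?_
  rw [h]; exact ENNReal.ofReal_ne_top

lemma integral_lagKernel_mul_exp {a s l : ℝ} (ha : -1 < a) (hs : 0 < s) (hl : 0 ≤ l) (x : ℝ) :
    ∫ y in Ioi (0 : ℝ), lagKernel a s x y * Real.exp (-(l * y)) =
      (1 + l * (1 - Real.exp (-s))) ^ (-(a + 1)) *
        Real.exp (-(Real.exp (-s) * l / (1 + l * (1 - Real.exp (-s))) * |x|)) := by
  have hq := one_sub_exp_neg_pos hs
  have hmeas : Measurable fun y => lagKernel a s x y * Real.exp (-(l * y)) :=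
    (measurable_lagKernel a measurable_const measurable_const measurable_id').mul (by fun_prop)
  rw [integral_eq_lintegral_of_nonneg_ae
    (Eventually.of_forall fun y => mul_nonneg (lagKernel_nonneg _ _ _ _) (Real.exp_pos _).le)
    hmeas.aestronglyMeasurable]
  rw [← ENNReal.toReal_ofReal (by positivity : 0 ≤ (1 + l * (1 - Real.exp (-s))) ^ (-(a + 1)) *
        Real.exp (-(Real.exp (-s) * l / (1 + l * (1 - Real.exp (-s))) * |x|))),
    ← lintegral_tsum_lagTerm_mul_exp ha hs hl x]
  congr 1
  refine lintegral_congr_ae ((ae_tsum_lagTerm_lt_top ha hs x).mono fun y hy => ?_)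
  simp only
  rw [ENNReal.ofReal_mul (lagKernel_nonneg _ _ _ _), lagKernel, ENNReal.ofReal_toReal hy.ne]

lemma integral_lagKernel {a s : ℝ} (ha : -1 < a) (hs : 0 < s) (x : ℝ) :
    ∫ y in Ioi (0 : ℝ), lagKernel a s x y = 1 := by
  simpa using integral_lagKernel_mul_exp ha hs le_rfl x

lemma integrableOn_lagKernel {a s : ℝ} (ha : -1 < a) (hs : 0 < s) (x : ℝ) :
    IntegrableOn (lagKernel a s x) (Ioi 0) := by
  by_contra h
  have := integral_lagKernel ha hs x
  rw [integral_undef h] at this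
  exact zero_ne_one this

/-- Nonnegative integrable functions on the half-line with the same Laplace transform coincide. -/
lemma ae_eq_of_laplace_eq {g h : ℝ → ℝ} (hgm : Measurable g) (hhm : Measurable h)
    (hg : IntegrableOn g (Ioi 0)) (hh : IntegrableOn h (Ioi 0)) (hg0 : ∀ z, 0 ≤ g z)
    (hh0 : ∀ z, 0 ≤ h z)
    (heq : ∀ n : ℕ, ∫ z in Ioi (0 : ℝ), g z * Real.exp (-(n * z)) =
      ∫ z in Ioi (0 : ℝ), h z * Real.exp (-(n * z))) :
    g =ᵐ[volume.restrict (Ioi 0)] h := by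
  have key : ∀ {g : ℝ → ℝ}, Measurable g → (∀ z, 0 ≤ g z) → ∀ n : ℕ,
      ∫ z, Real.exp (-(n * z)) ∂((volume.restrict (Ioi (0 : ℝ))).withDensity
        fun z => ENNReal.ofReal (g z)) = ∫ z in Ioi (0 : ℝ), g z * Real.exp (-(n * z)) := by
    intro g hgm hg0 n
    rw [integral_withDensity_eq_integral_toReal_smul hgm.ennreal_ofReal (by simp)]
    exact integral_congr_ae (Eventually.of_forall fun z => by
      simp [ENNReal.toReal_ofReal (hg0 z)])
  have hpos : ∀ g : ℝ → ℝ, ∀ᵐ z ∂((volume.restrict (Ioi (0 : ℝ))).withDensity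
      fun z => ENNReal.ofReal (g z)), 0 ≤ z := fun g =>
    (withDensity_absolutelyContinuous _ _).ae_le
      ((ae_restrict_mem measurableSet_Ioi).mono fun z hz => le_of_lt hz)
  have := isFiniteMeasure_withDensity_ofReal hg.2
  have := isFiniteMeasure_withDensity_ofReal hh.2
  have hmeas := measure_eq_of_laplace_eq (hpos g) (hpos h) fun n => by
    rw [key hgm hg0, key hhm hh0, heq]
  rw [withDensity_eq_iff hgm.ennreal_ofReal.aemeasurable hhm.ennreal_ofReal.aemeasurable] at hmeas
  · filter_upwards [hmeas] with z hz
    rwa [ENNReal.ofReal_eq_ofReal_iff (hg0 z) (hh0 z)] at hz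
  · exact ((lintegral_ofReal_le_lintegral_enorm g).trans_lt hg.2).ne

lemma integrable_lagKernel_mul_lagKernel {a s u : ℝ} (ha : -1 < a) (hs : 0 < s) (hu : 0 < u)
    (x : ℝ) : Integrable (fun p : ℝ × ℝ => lagKernel a s x p.1 * lagKernel a u p.1 p.2)
      ((volume.restrict (Ioi (0 : ℝ))).prod (volume.restrict (Ioi (0 : ℝ)))) := by
  have hmeas : Measurable fun p : ℝ × ℝ => lagKernel a s x p.1 * lagKernel a u p.1 p.2 :=
    (measurable_lagKernel a measurable_const measurable_const measurable_fst).mul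
      (measurable_lagKernel a measurable_const measurable_fst measurable_snd)
  rw [integrable_prod_iff hmeas.aestronglyMeasurable]
  refine ⟨Eventually.of_forall fun y =>
    (integrableOn_lagKernel ha hu y).const_mul (lagKernel a s x y), ?_⟩
  simp only [norm_mul, Real.norm_of_nonneg (lagKernel_nonneg _ _ _ _), integral_const_mul,
    integral_lagKernel ha hu, mul_one]
  exact integrableOn_lagKernel ha hs x

/-- The Chapman–Kolmogorov identity for the one-dimensional Laguerre heat kernel. -/
lemma ae_integral_lagKernel_mul_lagKernel {a s u : ℝ} (ha : -1 < a) (hs : 0 < s) (hu : 0 < u)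
    (x : ℝ) : ∀ᵐ z ∂(volume.restrict (Ioi (0 : ℝ))),
      ∫ y in Ioi (0 : ℝ), lagKernel a s x y * lagKernel a u y z = lagKernel a (s + u) x z := by
  have hprod := integrable_lagKernel_mul_lagKernel ha hs hu x
  have hmeas : Measurable fun p : ℝ × ℝ => lagKernel a s x p.2 * lagKernel a u p.2 p.1 :=
    (measurable_lagKernel a measurable_const measurable_const measurable_snd).mul
      (measurable_lagKernel a measurable_const measurable_snd measurable_fst)
  refine ae_eq_of_laplace_eq (hmeas.stronglyMeasurable.integral_prod_right
      (ν := volume.restrict (Ioi (0 : ℝ)))).measurable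
    (measurable_lagKernel a measurable_const measurable_const measurable_id')
    hprod.integral_prod_right (integrableOn_lagKernel ha (add_pos hs hu) x)
    (fun z => integral_nonneg fun y => mul_nonneg (lagKernel_nonneg _ _ _ _)
      (lagKernel_nonneg _ _ _ _)) (fun z => lagKernel_nonneg _ _ _ _) fun n => ?_
  have hl : (0 : ℝ) ≤ n := n.cast_nonneg
  have hq := one_sub_exp_neg_pos hs
  have hr := one_sub_exp_neg_pos hu
  have hD : 0 < 1 + (n : ℝ) * (1 - Real.exp (-u)) := by positivity
  have hl' : 0 ≤ Real.exp (-u) * n / (1 + (n : ℝ) * (1 - Real.exp (-u))) := by positivity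
  have hint : Integrable (fun p : ℝ × ℝ =>
      lagKernel a s x p.1 * lagKernel a u p.1 p.2 * Real.exp (-(n * p.2)))
      ((volume.restrict (Ioi (0 : ℝ))).prod (volume.restrict (Ioi (0 : ℝ)))) := by
    refine hprod.mul_bdd (c := 1) (by fun_prop : Measurable _).aestronglyMeasurable ?_
    rw [Measure.prod_restrict]
    filter_upwards [ae_restrict_mem (measurableSet_Ioi.prod measurableSet_Ioi)] with p hp
    have : (0 : ℝ) < p.2 := hp.2
    rw [Real.norm_of_nonneg (Real.exp_pos _).le]
    exact Real.exp_le_one_iff.2 (by simp; positivity)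
  calc ∫ z in Ioi (0 : ℝ), (∫ y in Ioi (0 : ℝ), lagKernel a s x y * lagKernel a u y z) *
        Real.exp (-(n * z))
      = ∫ z in Ioi (0 : ℝ), ∫ y in Ioi (0 : ℝ),
          lagKernel a s x y * lagKernel a u y z * Real.exp (-(n * z)) := by
        simp_rw [integral_mul_const]
    _ = ∫ y in Ioi (0 : ℝ), ∫ z in Ioi (0 : ℝ),
          lagKernel a s x y * lagKernel a u y z * Real.exp (-(n * z)) :=
        (integral_integral_swap hint).symm
    _ = ∫ y in Ioi (0 : ℝ), (1 + (n : ℝ) * (1 - Real.exp (-u))) ^ (-(a + 1)) *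
          (lagKernel a s x y * Real.exp (-(Real.exp (-u) * n /
            (1 + (n : ℝ) * (1 - Real.exp (-u))) * y))) := by
        refine setIntegral_congr_fun measurableSet_Ioi fun y hy => ?_
        simp only [mul_assoc (lagKernel a s x y)]
        rw [integral_const_mul, integral_lagKernel_mul_exp ha hu hl, abs_of_pos hy]
        ring
    _ = ∫ z in Ioi (0 : ℝ), lagKernel a (s + u) x z * Real.exp (-(n * z)) := by
        rw [integral_const_mul, integral_lagKernel_mul_exp ha hs hl',
          integral_lagKernel_mul_exp ha (add_pos hs hu) hl, ← mul_assoc,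
          ← Real.mul_rpow hD.le (by positivity)]
        have hDD : (1 + (n : ℝ) * (1 - Real.exp (-u))) *
            (1 + Real.exp (-u) * n / (1 + (n : ℝ) * (1 - Real.exp (-u))) * (1 - Real.exp (-s))) =
            1 + n * (1 - Real.exp (-(s + u))) := by
          rw [neg_add, Real.exp_add]
          field_simp
          ring
        have hpos : 0 < 1 + Real.exp (-u) * n / (1 + (n : ℝ) * (1 - Real.exp (-u))) *
            (1 - Real.exp (-s)) := by positivity
        rw [← hDD]
        congr 4
        rw [neg_add, Real.exp_add, mul_div_assoc', div_div, mul_assoc]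

/-- The Laguerre heat kernel on the positive orthant. -/
noncomputable def heatKernel {d : ℕ} (α : Fin d → ℝ) (s : ℝ) (x y : Fin d → ℝ) : ℝ :=
  ∏ j, lagKernel (α j) s (x j) (y j)

/-- The Laguerre heat semigroup on the positive orthant. -/
noncomputable def heatOp {d : ℕ} (α : Fin d → ℝ) (s : ℝ) (f : (Fin d → ℝ) → ℝ)
    (x : Fin d → ℝ) : ℝ :=
  ∫ y in posOrthant d, heatKernel α s x y * f y

section HeatSemigroup

variable {d : ℕ} {α : Fin d → ℝ} {f : (Fin d → ℝ) → ℝ} {M s u : ℝ}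

lemma heatKernel_nonneg (x y : Fin d → ℝ) : 0 ≤ heatKernel α s x y :=
  Finset.prod_nonneg fun _ _ => lagKernel_nonneg _ _ _ _

lemma measurable_heatKernel {X : Type*} [MeasurableSpace X] {s : X → ℝ} {x y : X → Fin d → ℝ}
    (hs : Measurable s) (hx : Measurable x) (hy : Measurable y) :
    Measurable fun p => heatKernel α (s p) (x p) (y p) :=
  Finset.measurable_fun_prod _ fun j _ => measurable_lagKernel (α j) hs
    ((measurable_pi_apply j).comp hx) ((measurable_pi_apply j).comp hy)

lemma measurable_heatOp {X : Type*} [MeasurableSpace X] {s : X → ℝ} {x : X → Fin d → ℝ}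
    (hf : Measurable f) (hs : Measurable s) (hx : Measurable x) :
    Measurable fun p => heatOp α (s p) f (x p) := by
  have hmeas : Measurable fun q : X × (Fin d → ℝ) => heatKernel α (s q.1) (x q.1) q.2 * f q.2 :=
    (measurable_heatKernel (hs.comp measurable_fst) (hx.comp measurable_fst) measurable_snd).mul
      (hf.comp measurable_snd)
  exact (hmeas.stronglyMeasurable.integral_prod_right
    (ν := volume.restrict (posOrthant d))).measurable

lemma measurableSet_posOrthant : MeasurableSet (posOrthant d) :=
  MeasurableSet.univ_pi fun _ => measurableSet_Ioi

lemma restrict_posOrthant : (volume : Measure (Fin d → ℝ)).restrict (posOrthant d) =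
    Measure.pi fun _ => volume.restrict (Ioi (0 : ℝ)) := by
  rw [posOrthant, volume_pi, Measure.restrict_pi_pi]

lemma integrableOn_heatKernel (hα : ∀ j, -1 < α j) (hs : 0 < s) (x : Fin d → ℝ) :
    IntegrableOn (heatKernel α s x) (posOrthant d) := by
  rw [IntegrableOn, restrict_posOrthant]
  exact Integrable.fintype_prod_dep fun j => integrableOn_lagKernel (hα j) hs (x j)

lemma integral_heatKernel (hα : ∀ j, -1 < α j) (hs : 0 < s) (x : Fin d → ℝ) :
    ∫ y in posOrthant d, heatKernel α s x y = 1 := by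
  rw [restrict_posOrthant]
  unfold heatKernel
  rw [integral_fintype_prod_eq_prod fun j y => lagKernel (α j) s (x j) y]
  simp [integral_lagKernel (hα _) hs]

/-- The Chapman–Kolmogorov identity for the Laguerre heat kernel. -/
lemma ae_integral_heatKernel_mul_heatKernel (hα : ∀ j, -1 < α j) (hs : 0 < s) (hu : 0 < u)
    (x : Fin d → ℝ) : ∀ᵐ z ∂(volume.restrict (posOrthant d)),
      ∫ y in posOrthant d, heatKernel α s x y * heatKernel α u y z = heatKernel α (s + u) x z := by
  rw [restrict_posOrthant]
  have hj : ∀ j, ∀ᵐ z ∂(Measure.pi fun _ : Fin d => volume.restrict (Ioi (0 : ℝ))),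
      ∫ y in Ioi (0 : ℝ), lagKernel (α j) s (x j) y * lagKernel (α j) u y (z j) =
        lagKernel (α j) (s + u) (x j) (z j) := fun j =>
    (Measure.quasiMeasurePreserving_eval (fun _ : Fin d => volume.restrict (Ioi (0 : ℝ))) j).ae
      (ae_integral_lagKernel_mul_lagKernel (hα j) hs hu (x j))
  filter_upwards [ae_all_iff.2 hj] with z hz
  simp only [heatKernel, ← Finset.prod_mul_distrib]
  rw [integral_fintype_prod_eq_prod fun j y =>
    lagKernel (α j) s (x j) y * lagKernel (α j) u y (z j)]
  exact Finset.prod_congr rfl fun j _ => hz j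

lemma abs_heatOp_le (hα : ∀ j, -1 < α j) (hs : 0 < s)
    (hM : ∀ y ∈ posOrthant d, |f y| ≤ M) (x : Fin d → ℝ) : |heatOp α s f x| ≤ M := by
  have hint : IntegrableOn (fun y => heatKernel α s x y * M) (posOrthant d) :=
    (integrableOn_heatKernel hα hs x).mul_const M
  have h := norm_integral_le_of_norm_le (f := fun y => heatKernel α s x y * f y) hint
    ((ae_restrict_mem measurableSet_posOrthant).mono fun y hy => by
      rw [norm_mul, Real.norm_of_nonneg (heatKernel_nonneg _ _)]
      exact mul_le_mul_of_nonneg_left (hM y hy) (heatKernel_nonneg _ _))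
  rwa [integral_mul_const, integral_heatKernel hα hs, one_mul] at h

lemma integrable_heatKernel_mul_heatKernel (hα : ∀ j, -1 < α j) (hs : 0 < s) (hu : 0 < u)
    (x : Fin d → ℝ) :
    Integrable (fun p : (Fin d → ℝ) × (Fin d → ℝ) => heatKernel α s x p.1 * heatKernel α u p.1 p.2)
      ((volume.restrict (posOrthant d)).prod (volume.restrict (posOrthant d))) := by
  have hmeas : Measurable fun p : (Fin d → ℝ) × (Fin d → ℝ) =>
      heatKernel α s x p.1 * heatKernel α u p.1 p.2 :=
    (measurable_heatKernel measurable_const measurable_const measurable_fst).mul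
      (measurable_heatKernel measurable_const measurable_fst measurable_snd)
  rw [integrable_prod_iff hmeas.aestronglyMeasurable]
  refine ⟨Eventually.of_forall fun y =>
    (integrableOn_heatKernel hα hu y).const_mul (heatKernel α s x y), ?_⟩
  simp only [norm_mul, Real.norm_of_nonneg (heatKernel_nonneg _ _), integral_const_mul,
    integral_heatKernel hα hu, mul_one]
  exact integrableOn_heatKernel hα hs x

lemma heatOp_heatOp (hα : ∀ j, -1 < α j) (hs : 0 < s) (hu : 0 < u) (hf : Measurable f)
    (hM : ∀ y ∈ posOrthant d, |f y| ≤ M) (x : Fin d → ℝ) :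
    heatOp α s (heatOp α u f) x = heatOp α (s + u) f x := by
  have hint : Integrable (fun p : (Fin d → ℝ) × (Fin d → ℝ) =>
      heatKernel α s x p.1 * heatKernel α u p.1 p.2 * f p.2)
      ((volume.restrict (posOrthant d)).prod (volume.restrict (posOrthant d))) := by
    refine (integrable_heatKernel_mul_heatKernel hα hs hu x).mul_bdd (c := M)
      (hf.comp measurable_snd).aestronglyMeasurable ?_
    rw [Measure.prod_restrict]
    filter_upwards [ae_restrict_mem (measurableSet_posOrthant.prod measurableSet_posOrthant)]
      with p hp using hM _ hp.2
  calc heatOp α s (heatOp α u f) x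
      = ∫ y in posOrthant d, ∫ z in posOrthant d,
          heatKernel α s x y * heatKernel α u y z * f z := by
        simp_rw [heatOp, ← integral_const_mul, mul_assoc]
    _ = ∫ z in posOrthant d, (∫ y in posOrthant d, heatKernel α s x y * heatKernel α u y z) *
          f z := by
        rw [integral_integral_swap hint]
        simp_rw [integral_mul_const]
    _ = heatOp α (s + u) f x :=
        integral_congr_ae ((ae_integral_heatKernel_mul_heatKernel hα hs hu x).mono fun z hz => by
          simp only [hz])

/-- Superpositions of the heat semigroup commute with the heat semigroup. -/
lemma heatOp_integral_mul_heatOp (hα : ∀ j, -1 < α j) (hs : 0 < s) (hf : Measurable f)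
    (hM : ∀ y ∈ posOrthant d, |f y| ≤ M) {w : ℝ → ℝ} (hw : IntegrableOn w (Ioi 0))
    (x : Fin d → ℝ) :
    heatOp α s (fun y => ∫ u in Ioi (0 : ℝ), w u * heatOp α u f y) x =
      ∫ u in Ioi (0 : ℝ), w u * heatOp α (s + u) f x := by
  have hint : Integrable (fun p : (Fin d → ℝ) × ℝ =>
      heatKernel α s x p.1 * w p.2 * heatOp α p.2 f p.1)
      ((volume.restrict (posOrthant d)).prod (volume.restrict (Ioi (0 : ℝ)))) := by
    refine (Integrable.mul_prod (integrableOn_heatKernel hα hs x) hw).mul_bdd (c := M)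
      (measurable_heatOp hf measurable_snd measurable_fst).aestronglyMeasurable ?_
    rw [Measure.prod_restrict]
    filter_upwards [ae_restrict_mem (measurableSet_posOrthant.prod measurableSet_Ioi)]
      with p hp using abs_heatOp_le hα hp.2 hM _
  calc heatOp α s (fun y => ∫ u in Ioi (0 : ℝ), w u * heatOp α u f y) x
      = ∫ y in posOrthant d, ∫ u in Ioi (0 : ℝ), heatKernel α s x y * w u * heatOp α u f y := by
        simp_rw [heatOp.eq_1 α s, ← integral_const_mul, mul_assoc]
    _ = ∫ u in Ioi (0 : ℝ), ∫ y in posOrthant d, heatKernel α s x y * w u * heatOp α u f y :=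
        integral_integral_swap hint
    _ = ∫ u in Ioi (0 : ℝ), w u * heatOp α (s + u) f x := by
        refine setIntegral_congr_fun measurableSet_Ioi fun u hu => ?_
        rw [← heatOp_heatOp hα hs hu hf hM x, heatOp.eq_1 α s, ← integral_const_mul]
        exact integral_congr_ae (Eventually.of_forall fun y => by ring)

/-- The Poisson semigroup obtained from the heat semigroup by subordination. -/
noncomputable def poissonOp {d : ℕ} (α : Fin d → ℝ) (t : ℝ) (f : (Fin d → ℝ) → ℝ)
    (x : Fin d → ℝ) : ℝ :=
  ∫ s in Ioi (0 : ℝ), stableDensity t s * heatOp α s f x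

lemma poissonOp_integral_mul_heatOp (hα : ∀ j, -1 < α j) {t : ℝ} (ht : 0 < t) (hf : Measurable f)
    (hM : ∀ y ∈ posOrthant d, |f y| ≤ M) {w : ℝ → ℝ} (hw : IntegrableOn w (Ioi 0))
    (x : Fin d → ℝ) :
    poissonOp α t (fun y => ∫ u in Ioi (0 : ℝ), w u * heatOp α u f y) x =
      ∫ u in Ioi (0 : ℝ), w u * ∫ s in Ioi (0 : ℝ), stableDensity t s * heatOp α (u + s) f x := by
  have hint : Integrable (fun p : ℝ × ℝ =>
      stableDensity t p.1 * w p.2 * heatOp α (p.1 + p.2) f x)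
      ((volume.restrict (Ioi (0 : ℝ))).prod (volume.restrict (Ioi (0 : ℝ)))) := by
    refine (Integrable.mul_prod (integrableOn_stableDensity ht) hw).mul_bdd (c := M)
      (measurable_heatOp hf (measurable_fst.add measurable_snd)
        measurable_const).aestronglyMeasurable ?_
    rw [Measure.prod_restrict]
    filter_upwards [ae_restrict_mem (measurableSet_Ioi.prod measurableSet_Ioi)]
      with p hp using abs_heatOp_le hα (add_pos hp.1 hp.2) hM _
  calc poissonOp α t (fun y => ∫ u in Ioi (0 : ℝ), w u * heatOp α u f y) x
      = ∫ s in Ioi (0 : ℝ), ∫ u in Ioi (0 : ℝ),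
          stableDensity t s * w u * heatOp α (s + u) f x := by
        refine setIntegral_congr_fun measurableSet_Ioi fun s hs => ?_
        rw [heatOp_integral_mul_heatOp hα hs hf hM hw, ← integral_const_mul]
        simp_rw [mul_assoc]
    _ = ∫ u in Ioi (0 : ℝ), ∫ s in Ioi (0 : ℝ),
          stableDensity t s * w u * heatOp α (s + u) f x := integral_integral_swap hint
    _ = _ := by
        refine integral_congr_ae (Eventually.of_forall fun u => ?_)
        simp only [← integral_const_mul, add_comm u]
        exact integral_congr_ae (Eventually.of_forall fun s => by ring)

end HeatSemigroup

/-- The `n`-th time derivative of the Poisson semigroup. -/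
noncomputable def poissonDeriv (n : ℕ) {d : ℕ} (α : Fin d → ℝ) (t : ℝ) (f : (Fin d → ℝ) → ℝ)
    (x : Fin d → ℝ) : ℝ :=
  ∫ s in Ioi (0 : ℝ), stableDeriv n t s * heatOp α s f x

section PoissonSemigroup

variable {d : ℕ} {α : Fin d → ℝ} {f : (Fin d → ℝ) → ℝ} {M : ℝ}

lemma iteratedDeriv_poissonOp (hα : ∀ j, -1 < α j) (hf : Measurable f)
    (hM : ∀ y ∈ posOrthant d, |f y| ≤ M) (x : Fin d → ℝ) (n : ℕ) {t : ℝ} (ht : 0 < t) :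
    iteratedDeriv n (fun t => poissonOp α t f x) t = poissonDeriv n α t f x :=
  iteratedDeriv_integral_stableDensity n (measurable_heatOp hf measurable_id' measurable_const)
    (fun _ hs => abs_heatOp_le hα hs hM x) t ht

lemma hasDerivAt_poissonDeriv (hα : ∀ j, -1 < α j) (hf : Measurable f)
    (hM : ∀ y ∈ posOrthant d, |f y| ≤ M) (x : Fin d → ℝ) (n : ℕ) {t : ℝ} (ht : 0 < t) :
    HasDerivAt (fun t => poissonDeriv n α t f x) (poissonDeriv (n + 1) α t f x) t :=
  hasDerivAt_integral_stableDeriv n ht (measurable_heatOp hf measurable_id' measurable_const)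
    (fun _ hs => abs_heatOp_le hα hs hM x)

lemma exists_abs_poissonDeriv_le (hα : ∀ j, -1 < α j) (n : ℕ) :
    ∃ C ≥ (0 : ℝ), ∀ (M : ℝ) (f : (Fin d → ℝ) → ℝ), (∀ y ∈ posOrthant d, |f y| ≤ M) →
      ∀ t > 0, ∀ x, |poissonDeriv n α t f x| ≤ C * M * (t ^ n)⁻¹ := by
  obtain ⟨C, hC, h⟩ := exists_abs_integral_stableDeriv_le n
  exact ⟨C, hC, fun M f hM t ht x => h M _ (fun s hs => abs_heatOp_le hα hs hM x) t ht⟩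

lemma measurable_poissonDeriv (hf : Measurable f) (n : ℕ) (t : ℝ) :
    Measurable (poissonDeriv n α t f) := by
  have hmeas : Measurable fun q : (Fin d → ℝ) × ℝ => stableDeriv n t q.2 * heatOp α q.2 f q.1 :=
    ((measurable_stableDeriv n t).comp measurable_snd).mul
      (measurable_heatOp hf measurable_snd measurable_fst)
  exact (hmeas.stronglyMeasurable.integral_prod_right
    (ν := volume.restrict (Ioi (0 : ℝ)))).measurable

lemma poissonDeriv_add (hα : ∀ j, -1 < α j) (hf : Measurable f)
    (hM : ∀ y ∈ posOrthant d, |f y| ≤ M) (x : Fin d → ℝ) (k : ℕ) {t u : ℝ} (ht : 0 < t)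
    (hu : 0 < u) : poissonDeriv k α (t + u) f x = poissonOp α t (poissonDeriv k α u f) x := by
  set g : ℝ → ℝ := fun v => ∫ s in Ioi (0 : ℝ), stableDensity t s * heatOp α (v + s) f x with hg
  have hgmeas : Measurable g := by
    have hmeas : Measurable fun q : ℝ × ℝ => stableDensity t q.2 * heatOp α (q.1 + q.2) f x :=
      ((measurable_stableDensity t).comp measurable_snd).mul
        (measurable_heatOp hf (measurable_fst.add measurable_snd) measurable_const)
    exact (hmeas.stronglyMeasurable.integral_prod_right
      (ν := volume.restrict (Ioi (0 : ℝ)))).measurable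
  have hgM : ∀ v > 0, |g v| ≤ M := by
    intro v hv
    have h := norm_integral_le_of_norm_le (f := fun s => stableDensity t s * heatOp α (v + s) f x)
      ((integrableOn_stableDensity ht).mul_const M)
      ((ae_restrict_mem measurableSet_Ioi).mono fun s hs => by
        have hη := stableDensity_nonneg ht.le (le_of_lt hs)
        rw [norm_mul, Real.norm_of_nonneg hη]
        exact mul_le_mul_of_nonneg_left (abs_heatOp_le hα (add_pos hv hs) hM x) hη)
    rwa [integral_mul_const, integral_stableDensity ht, one_mul] at h
  have hsemi : (fun v => poissonOp α (t + v) f x) =ᶠ[𝓝 u]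
      fun v => ∫ s in Ioi (0 : ℝ), stableDensity v s * g s := by
    filter_upwards [Ioi_mem_nhds hu] with v hv
    rw [hg, integral_stableDensity_add hv ht
      (measurable_heatOp hf measurable_id' measurable_const)
      (fun s hs => abs_heatOp_le hα hs hM x), poissonOp, add_comm]
  have hshift := iteratedDeriv_comp_const_add k (fun v => poissonOp α v f x) t
  calc poissonDeriv k α (t + u) f x
      = iteratedDeriv k (fun v => poissonOp α v f x) (t + u) :=
        (iteratedDeriv_poissonOp hα hf hM x k (add_pos ht hu)).symm
    _ = iteratedDeriv k (fun v => poissonOp α (t + v) f x) u := (congrFun hshift u).symm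
    _ = ∫ s in Ioi (0 : ℝ), stableDeriv k u s * g s := by
        rw [hsemi.iteratedDeriv_eq, iteratedDeriv_integral_stableDensity k hgmeas hgM u hu]
    _ = poissonOp α t (poissonDeriv k α u f) x :=
        (poissonOp_integral_mul_heatOp hα ht hf hM (integrableOn_stableDeriv k hu) x).symm

lemma poissonDeriv_add_order (hα : ∀ j, -1 < α j) (hf : Measurable f)
    (hM : ∀ y ∈ posOrthant d, |f y| ≤ M) (x : Fin d → ℝ) (m k : ℕ) {t u : ℝ} (ht : 0 < t)
    (hu : 0 < u) :
    poissonDeriv (m + k) α (t + u) f x = poissonDeriv m α t (poissonDeriv k α u f) x := by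
  obtain ⟨C, -, hC⟩ := exists_abs_poissonDeriv_le hα k
  set F : ℝ → ℝ := fun v => poissonOp α v f x with hF
  have hsemi : (fun v => iteratedDeriv k F (v + u)) =ᶠ[𝓝 t]
      fun v => poissonOp α v (poissonDeriv k α u f) x := by
    filter_upwards [Ioi_mem_nhds ht] with v hv
    rw [iteratedDeriv_poissonOp hα hf hM x k (add_pos hv hu), poissonDeriv_add hα hf hM x k hv hu]
  have hshift := iteratedDeriv_comp_add_const m (iteratedDeriv k F) u
  calc poissonDeriv (m + k) α (t + u) f x
      = iteratedDeriv (m + k) F (t + u) :=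
        (iteratedDeriv_poissonOp hα hf hM x (m + k) (add_pos ht hu)).symm
    _ = iteratedDeriv m (iteratedDeriv k F) (t + u) := by
        simp only [iteratedDeriv_eq_iterate, Function.iterate_add_apply]
    _ = iteratedDeriv m (fun v => iteratedDeriv k F (v + u)) t := (congrFun hshift t).symm
    _ = poissonDeriv m α t (poissonDeriv k α u f) x := by
        rw [hsemi.iteratedDeriv_eq, iteratedDeriv_poissonOp hα (measurable_poissonDeriv hf k u)
          (fun y _ => hC M f hM u hu y) x m ht]

end PoissonSemigroup

/-- A function vanishing at infinity is controlled by a power bound on its derivative. -/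
lemma abs_le_of_abs_deriv_le_rpow {G G' : ℝ → ℝ} {A γ : ℝ} (hγ : γ < 0)
    (hG : ∀ t > 0, HasDerivAt G (G' t) t) (hG' : ∀ t > 0, |G' t| ≤ A * t ^ (γ - 1))
    (hlim : Tendsto G atTop (𝓝 0)) {t : ℝ} (ht : 0 < t) : |G t| ≤ A / (-γ) * t ^ γ := by
  have upper : ∀ {G G' : ℝ → ℝ}, (∀ t > 0, HasDerivAt G (G' t) t) →
      (∀ t > 0, |G' t| ≤ A * t ^ (γ - 1)) → Tendsto G atTop (𝓝 0) →
      G t ≤ A / (-γ) * t ^ γ := by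
    intro G G' hG hG' hlim
    set H : ℝ → ℝ := fun s => G s - A / (-γ) * s ^ γ with hH
    have hder : ∀ s > 0, HasDerivAt H (G' s + A * s ^ (γ - 1)) s := fun s hs => by
      have h := (hG s hs).sub ((Real.hasDerivAt_rpow_const (p := γ) (Or.inl hs.ne')).const_mul
        (A / (-γ)))
      refine h.congr_deriv ?_
      have := hγ.ne
      field_simp
      ring
    have hmono : MonotoneOn H (Ioi 0) := by
      refine monotoneOn_of_deriv_nonneg (convex_Ioi 0)
        (fun s hs => (hder s hs).continuousAt.continuousWithinAt) ?_ ?_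
      · rw [interior_Ioi]
        exact fun s hs => (hder s hs).differentiableAt.differentiableWithinAt
      · rw [interior_Ioi]
        intro s hs
        rw [(hder s hs).deriv]
        linarith [neg_le_of_abs_le (hG' s hs)]
    have hHlim : Tendsto H atTop (𝓝 0) := by
      have h := tendsto_rpow_neg_atTop (neg_pos.2 hγ)
      rw [neg_neg] at h
      simpa using hlim.sub (h.const_mul (A / (-γ)))
    have hle : H t ≤ 0 := ge_of_tendsto hHlim <| by
      filter_upwards [eventually_ge_atTop t] with s hs using hmono ht (ht.trans_le hs) hs
    simpa [hH] using hle
  refine abs_le'.2 ⟨upper hG hG' hlim, ?_⟩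
  exact upper (G := fun s => -G s) (G' := fun s => -G' s) (fun s hs => (hG s hs).neg)
    (fun s hs => by simpa using hG' s hs) (by simpa using hlim.neg)

section OrderChange

variable {d : ℕ} {α : Fin d → ℝ} {β : ℝ}

/-- A bound of homogeneity `β` for time derivatives of order `k` of the Poisson semigroup implies
the analogous bound for those of order `l`. -/
def OrderChange {d : ℕ} (α : Fin d → ℝ) (β : ℝ) (k l : ℕ) : Prop :=
  ∃ C > (0 : ℝ), ∀ f : (Fin d → ℝ) → ℝ, Measurable f → (∃ M, ∀ y, |f y| ≤ M) →
    ∀ A ≥ (0 : ℝ),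
      (∀ t > (0 : ℝ), ∀ x ∈ posOrthant d, |poissonDeriv k α t f x| ≤ A * t ^ (β - (k : ℝ))) →
      ∀ t > (0 : ℝ), ∀ x ∈ posOrthant d, |poissonDeriv l α t f x| ≤ C * A * t ^ (β - (l : ℝ))

lemma OrderChange.trans {k l m : ℕ} (h₁ : OrderChange α β k l) (h₂ : OrderChange α β l m) :
    OrderChange α β k m := by
  obtain ⟨C, hC, h₁⟩ := h₁
  obtain ⟨D, hD, h₂⟩ := h₂
  refine ⟨D * C, mul_pos hD hC, fun f hf hM A hA h => ?_⟩
  rw [mul_assoc]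
  exact h₂ f hf hM (C * A) (by positivity) (h₁ f hf hM A hA h)

lemma orderChange_add (hα : ∀ j, -1 < α j) (k m : ℕ) : OrderChange α β k (m + k) := by
  obtain ⟨C, hC, h⟩ := exists_abs_poissonDeriv_le hα m
  refine ⟨(C + 1) * 2 ^ ((k : ℝ) - β) * 2 ^ m, by positivity, ?_⟩
  rintro f hf ⟨M, hM⟩ A hA hk t ht x -
  have ht2 : 0 < t / 2 := by positivity
  have key := h (A * (t / 2) ^ (β - (k : ℝ))) (poissonDeriv k α (t / 2) f)
    (fun y hy => hk _ ht2 y hy) (t / 2) ht2 x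
  rw [← poissonDeriv_add_order hα hf (fun y _ => hM y) x m k ht2 ht2, add_halves] at key
  have hpow : (t / 2) ^ (β - (k : ℝ)) = 2 ^ ((k : ℝ) - β) * t ^ (β - (k : ℝ)) := by
    rw [Real.div_rpow ht.le (by norm_num), ← neg_sub β, Real.rpow_neg (by norm_num)]
    ring
  have hpow' : t ^ (β - ((m + k : ℕ) : ℝ)) = t ^ (β - (k : ℝ)) * (t ^ m)⁻¹ := by
    rw [← Real.rpow_natCast, ← Real.rpow_neg ht.le, ← Real.rpow_add ht]
    congr 1
    push_cast
    ring
  rw [hpow, div_pow, inv_div] at key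
  rw [hpow']
  refine key.trans ?_
  have : C * (A * (2 ^ ((k : ℝ) - β) * t ^ (β - (k : ℝ)))) * (2 ^ m / t ^ m) =
      C * (2 ^ ((k : ℝ) - β) * 2 ^ m * A * (t ^ (β - (k : ℝ)) * (t ^ m)⁻¹)) := by ring
  rw [this]
  have h0 : 0 ≤ 2 ^ ((k : ℝ) - β) * 2 ^ m * A * (t ^ (β - (k : ℝ)) * (t ^ m)⁻¹) := by positivity
  nlinarith

lemma orderChange_succ (hα : ∀ j, -1 < α j) (hβ : 0 < β) {l : ℕ} (hl : β < l) :
    OrderChange α β (l + 1) l := by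
  obtain ⟨C, hC, h⟩ := exists_abs_poissonDeriv_le hα l
  refine ⟨1 / ((l : ℝ) - β), by have := sub_pos.2 hl; positivity, ?_⟩
  rintro f hf ⟨M, hM⟩ A hA hk t ht x hx
  have hl0 : l ≠ 0 := by rintro rfl; simp at hl; linarith
  have hlim : Tendsto (fun t => poissonDeriv l α t f x) atTop (𝓝 0) := by
    have hz : Tendsto (fun t : ℝ => C * M * (t ^ l)⁻¹) atTop (𝓝 0) := by
      simpa using ((tendsto_pow_atTop hl0).inv_tendsto_atTop (𝕜 := ℝ)).const_mul (C * M)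
    refine squeeze_zero_norm' ?_ hz
    filter_upwards [eventually_gt_atTop 0] with t ht using h M f (fun y _ => hM y) t ht x
  have key := abs_le_of_abs_deriv_le_rpow (A := A) (sub_neg.2 hl)
    (fun t ht => hasDerivAt_poissonDeriv hα hf (fun y _ => hM y) x l ht)
    (fun t ht => by
      have := hk t ht x hx
      rwa [Nat.cast_succ, ← sub_sub] at this) hlim ht
  rwa [neg_sub, div_eq_mul_one_div, mul_comm A] at key

lemma orderChange (hα : ∀ j, -1 < α j) (hβ : 0 < β) {k l : ℕ} (hl : β < l) :
    OrderChange α β k l := by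
  rcases le_total k l with hkl | hkl
  · obtain ⟨m, rfl⟩ := Nat.exists_eq_add_of_le' hkl
    exact orderChange_add hα k m
  · induction k, hkl using Nat.le_induction with
    | base => simpa using orderChange_add hα l 0
    | succ n hn ih =>
      exact (orderChange_succ hα hβ (hl.trans_le (by exact_mod_cast hn))).trans ih

end OrderChange

lemma setIntegral_Ioo_eq_setIntegral_exp_neg (h : ℝ → ℝ) :
    ∫ r in Ioo (0 : ℝ) 1, h r =
      ∫ s in Ioi (0 : ℝ), Real.exp (-s) * h (Real.exp (-s)) := by
  have himage : (fun s : ℝ => Real.exp (-s)) '' Ioi 0 = Ioo 0 1 := by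
    ext r
    constructor
    · rintro ⟨s, hs, rfl⟩
      exact ⟨Real.exp_pos _, by simpa using hs⟩
    · rintro ⟨h0, h1⟩
      exact ⟨-Real.log r, by simpa using Real.log_neg h0 h1, by simp [Real.exp_log h0]⟩
  have hderiv : ∀ s ∈ Ioi (0 : ℝ),
      HasDerivWithinAt (fun s : ℝ => Real.exp (-s)) (-Real.exp (-s)) (Ioi 0) s := fun s _ => by
    simpa using ((hasDerivAt_neg s).exp).hasDerivWithinAt
  have hinj : InjOn (fun s : ℝ => Real.exp (-s)) (Ioi 0) := fun s _ u _ hsu => by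
    simpa using hsu
  rw [← himage, integral_image_eq_integral_abs_deriv_smul measurableSet_Ioi hderiv hinj]
  simp only [abs_neg, Real.abs_exp, smul_eq_mul]

lemma inv_mul_besselI_eq_lagKernel {a s x y : ℝ} (ha : -1 < a) (hs : 0 < s) (hx : 0 < x)
    (hy : 0 < y) :
    (1 - Real.exp (-s))⁻¹ * ((y / x) ^ (a / 2) *
      Real.exp (-((Real.exp (-s) * x + y) / (1 - Real.exp (-s))) - a * Real.log (Real.exp (-s)) / 2) *
      besselI a (2 * √(Real.exp (-s) * x * y) / (1 - Real.exp (-s)))) = lagKernel a s x y := by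
  rw [lagKernel_eq_tsum ha hs x hy, besselI, ← tsum_mul_left, ← tsum_mul_left]
  refine tsum_congr fun m => ?_
  have hq := one_sub_exp_neg_pos hs
  have hr := Real.exp_pos (-s)
  rw [lagTerm, abs_of_pos hx]
  set q := 1 - Real.exp (-s)
  set r := Real.exp (-s) with hrdef
  have hm : 0 < (m : ℝ) + a + 1 := by have := m.cast_nonneg (α := ℝ); linarith
  have hΓ := Real.Gamma_pos_of_pos hm
  have hexp : Real.exp (-((r * x + y) / q) - a * Real.log r / 2) =
      Real.exp (-(r * q⁻¹ * x)) * Real.exp (-(q⁻¹ * y)) * r ^ (-(a / 2)) := by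
    rw [Real.rpow_def_of_pos hr, ← Real.exp_add, ← Real.exp_add]
    congr 1
    field_simp
    ring
  have hbase : (2 * √(r * x * y) / q / 2) ^ (2 * (m : ℝ) + a) =
      (r * x * y) ^ m * (r ^ (a / 2) * x ^ (a / 2) * y ^ (a / 2)) * q⁻¹ ^ m *
        q⁻¹ ^ ((m : ℝ) + a) := by
    have : 2 * √(r * x * y) / q / 2 = √(r * x * y) * q⁻¹ := by field_simp
    rw [this, Real.mul_rpow (by positivity) (by positivity), Real.sqrt_eq_rpow,
      ← Real.rpow_mul (by positivity)]
    have h1 : 1 / 2 * (2 * (m : ℝ) + a) = m + a / 2 := by ring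
    have h2 : 2 * (m : ℝ) + a = m + (m + a) := by ring
    rw [h1, h2, Real.rpow_add (by positivity) (m : ℝ) (a / 2), Real.rpow_natCast,
      Real.rpow_add (by positivity) (m : ℝ) (m + a), Real.rpow_natCast,
      Real.mul_rpow (by positivity) hy.le, Real.mul_rpow hr.le hx.le]
    ring
  have hyy : y ^ ((m : ℝ) + a) = y ^ m * (y ^ (a / 2) * y ^ (a / 2)) := by
    rw [← Real.rpow_add hy, add_halves, Real.rpow_add hy, Real.rpow_natCast]
  rw [hexp, hbase, hyy, Real.div_rpow hy.le hx.le, Real.rpow_neg hr.le,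
    Real.rpow_add_one (inv_pos.2 hq).ne' ((m : ℝ) + a), mul_pow, mul_pow, mul_pow, mul_pow]
  have h1 := Real.rpow_pos_of_pos hr (a / 2)
  have h2 := Real.rpow_pos_of_pos hx (a / 2)
  field_simp

section PoissonKernel

variable {d : ℕ} {α : Fin d → ℝ} {f : (Fin d → ℝ) → ℝ} {M t : ℝ}

lemma plKernel_eq_integral (hα : ∀ j, -1 < α j) {x y : Fin d → ℝ}
    (hx : x ∈ posOrthant d) (hy : y ∈ posOrthant d) :
    plKernel d α t x y = ∫ s in Ioi (0 : ℝ), stableDensity t s * heatKernel α s x y := by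
  rw [plKernel, setIntegral_Ioo_eq_setIntegral_exp_neg, ← integral_const_mul]
  refine setIntegral_congr_fun measurableSet_Ioi fun s hs => ?_
  have hs : 0 < s := hs
  have hq := one_sub_exp_neg_pos hs
  have hprod : heatKernel α s x y = ((1 - Real.exp (-s)) ^ d)⁻¹ *
      ∏ j, (y j / x j) ^ (α j / 2) *
        Real.exp (-((Real.exp (-s) * x j + y j) / (1 - Real.exp (-s))) -
          α j * Real.log (Real.exp (-s)) / 2) *
        besselI (α j) (2 * √(Real.exp (-s) * x j * y j) / (1 - Real.exp (-s))) := by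
    have hconst : ((1 - Real.exp (-s)) ^ d)⁻¹ = ∏ _j : Fin d, (1 - Real.exp (-s))⁻¹ := by simp
    rw [hconst, ← Finset.prod_mul_distrib]
    exact Finset.prod_congr rfl fun j _ => (inv_mul_besselI_eq_lagKernel (hα j) hs
      (hx j (mem_univ j)) (hy j (mem_univ j))).symm
  have hexp : t ^ 2 / (4 * Real.log (Real.exp (-s))) = -(t ^ 2 / (4 * s)) := by
    rw [Real.log_exp, mul_neg, div_neg]
  have hpow : (-Real.log (Real.exp (-s))) ^ ((3 : ℝ) / 2) = (s ^ (-(3 / 2 : ℝ)))⁻¹ := by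
    rw [Real.log_exp, neg_neg, Real.rpow_neg hs.le, inv_inv]
  rw [hprod, stableDensity, hexp, hpow]
  generalize (Finset.prod (Finset.univ : Finset (Fin d)) _ : ℝ) = P
  have := Real.exp_pos (-s)
  field_simp

lemma plP_eq_poissonOp (hα : ∀ j, -1 < α j) (ht : 0 < t) (hf : Measurable f)
    (hM : ∀ y ∈ posOrthant d, |f y| ≤ M) {x : Fin d → ℝ} (hx : x ∈ posOrthant d) :
    plP d α t f x = poissonOp α t f x := by
  have hkmeas : Measurable fun p : ℝ × (Fin d → ℝ) =>
      stableDensity t p.1 * heatKernel α p.1 x p.2 :=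
    ((measurable_stableDensity t).comp measurable_fst).mul
      (measurable_heatKernel measurable_fst measurable_const measurable_snd)
  have hk : Integrable (fun p : ℝ × (Fin d → ℝ) => stableDensity t p.1 * heatKernel α p.1 x p.2)
      ((volume.restrict (Ioi (0 : ℝ))).prod (volume.restrict (posOrthant d))) := by
    rw [integrable_prod_iff hkmeas.aestronglyMeasurable]
    constructor
    · filter_upwards [ae_restrict_mem measurableSet_Ioi] with s hs
      exact (integrableOn_heatKernel hα hs x).const_mul (stableDensity t s)
    · refine (integrableOn_stableDensity ht).congr ?_
      filter_upwards [ae_restrict_mem measurableSet_Ioi] with s hs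
      simp only [norm_mul, Real.norm_of_nonneg (heatKernel_nonneg _ _), integral_const_mul,
        integral_heatKernel hα hs, mul_one,
        Real.norm_of_nonneg (stableDensity_nonneg ht.le (le_of_lt hs))]
  have hint : Integrable (fun p : ℝ × (Fin d → ℝ) =>
      stableDensity t p.1 * heatKernel α p.1 x p.2 * f p.2)
      ((volume.restrict (Ioi (0 : ℝ))).prod (volume.restrict (posOrthant d))) := by
    refine hk.mul_bdd (c := M) (hf.comp measurable_snd).aestronglyMeasurable ?_
    rw [Measure.prod_restrict]
    filter_upwards [ae_restrict_mem (measurableSet_Ioi.prod measurableSet_posOrthant)]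
      with p hp using hM _ hp.2
  calc plP d α t f x = ∫ y in posOrthant d, ∫ s in Ioi (0 : ℝ),
          stableDensity t s * heatKernel α s x y * f y := by
        rw [plP, if_neg ht.ne']
        refine setIntegral_congr_fun measurableSet_posOrthant fun y hy => ?_
        simp only [plKernel_eq_integral hα hx hy, integral_mul_const]
    _ = ∫ s in Ioi (0 : ℝ), ∫ y in posOrthant d,
          stableDensity t s * heatKernel α s x y * f y := (integral_integral_swap hint).symm
    _ = poissonOp α t f x := by
        simp_rw [poissonOp, heatOp, ← integral_const_mul, mul_assoc]

lemma iteratedDeriv_plP (hα : ∀ j, -1 < α j) (ht : 0 < t) (hf : Measurable f)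
    (hM : ∀ y, |f y| ≤ M) {x : Fin d → ℝ} (hx : x ∈ posOrthant d) (n : ℕ) :
    iteratedDeriv n (fun u => plP d α u f x) t = poissonDeriv n α t f x := by
  have h : (fun u => plP d α u f x) =ᶠ[𝓝 t] fun u => poissonOp α u f x := by
    filter_upwards [Ioi_mem_nhds ht] with u hu
      using plP_eq_poissonOp hα hu hf (fun y _ => hM y) hx
  rw [h.iteratedDeriv_eq, iteratedDeriv_poissonOp hα hf (fun y _ => hM y) x n ht]

end PoissonKernel

lemma exists_lipschitz_order_change {d : ℕ} {α : Fin d → ℝ} (hα : ∀ j, -1 < α j) {β : ℝ}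
    (hβ : 0 < β) (k : ℕ) {l : ℕ} (hl : β < l) :
    ∃ C > 0, ∀ f : (Fin d → ℝ) → ℝ, Measurable f → (∃ M, ∀ y, |f y| ≤ M) →
      ∀ A ≥ (0 : ℝ),
        (∀ t > (0 : ℝ), ∀ x ∈ posOrthant d,
          |iteratedDeriv k (fun u => plP d α u f x) t| ≤ A * t ^ (β - (k : ℝ))) →
        ∀ t > (0 : ℝ), ∀ x ∈ posOrthant d,
          |iteratedDeriv l (fun u => plP d α u f x) t| ≤ C * A * t ^ (β - (l : ℝ)) := by
  obtain ⟨C, hC, h⟩ := orderChange hα hβ (k := k) hl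
  refine ⟨C, hC, fun f hf ⟨M, hM⟩ A hA hk t ht x hx => ?_⟩
  rw [iteratedDeriv_plP hα ht hf hM hx]
  refine h f hf ⟨M, hM⟩ A hA (fun t ht x hx => ?_) t ht x hx
  rw [← iteratedDeriv_plP hα ht hf hM hx]
  exact hk t ht x hx

theorem laguerre_lipschitz_condition_independent_of_order
    (d : ℕ) (hd : 1 ≤ d) (α : Fin d → ℝ) (hα : ∀ j, -(1 / 2 : ℝ) < α j)
    (β : ℝ) (hβ : 0 < β) (k l : ℕ) (hk : β < k) (hl : β < l) :
    (∀ f : (Fin d → ℝ) → ℝ, Measurable f → (∃ M, ∀ y, |f y| ≤ M) →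
      ((∃ A ≥ (0 : ℝ), ∀ t > (0 : ℝ), ∀ x ∈ posOrthant d,
          |iteratedDeriv k (fun u => plP d α u f x) t| ≤ A * t ^ (β - (k : ℝ))) ↔
       (∃ A' ≥ (0 : ℝ), ∀ t > (0 : ℝ), ∀ x ∈ posOrthant d,
          |iteratedDeriv l (fun u => plP d α u f x) t| ≤ A' * t ^ (β - (l : ℝ))))) ∧
    ∃ C > 0, ∀ f : (Fin d → ℝ) → ℝ, Measurable f → (∃ M, ∀ y, |f y| ≤ M) →
      ∀ A ≥ (0 : ℝ),
        (∀ t > (0 : ℝ), ∀ x ∈ posOrthant d,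
          |iteratedDeriv k (fun u => plP d α u f x) t| ≤ A * t ^ (β - (k : ℝ))) →
        ∀ t > (0 : ℝ), ∀ x ∈ posOrthant d,
          |iteratedDeriv l (fun u => plP d α u f x) t| ≤ C * A * t ^ (β - (l : ℝ)) := by
  have hα' : ∀ j, -1 < α j := fun j => by linarith [hα j]
  obtain ⟨C, hC, hkl⟩ := exists_lipschitz_order_change hα' hβ k hl
  obtain ⟨D, hD, hlk⟩ := exists_lipschitz_order_change hα' hβ l hk
  refine ⟨fun f hf hM => ⟨?_, ?_⟩, C, hC, hkl⟩
  · rintro ⟨A, hA, h⟩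
    exact ⟨C * A, by positivity, hkl f hf hM A hA h⟩
  · rintro ⟨A, hA, h⟩
    exact ⟨D * A, by positivity, hlk f hf hM A hA h⟩
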